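/- Let a⁺ ∈ ℝ, let m be a positive integer, ε > 0, and define Q⁺ : ℂ → ℂ by Q⁺(μ) = (2/3) e^{iπ/4} (a⁺ − μ)^{3/2} (principal branch). For each positive integer k set r_k = ( (3π/2)(k − 1/4) )^{2/3} and μ_k = a⁺ − e^{iπ/6} (mε)^{1/3} r_k. Then Im μ_k < 0, |μ_k − a⁺| = (mε)^{1/3} r_k, Re Q⁺(μ_k) = 0, and Im Q⁺(μ_k) = (mε)^{1/2} (kπ − π/4). -/

import Mathlib

/-- Principal real powers in polar form. -/
theorem Complex.ofReal_mul_exp_mul_I_cpow {R θ : ℝ} (hR : 0 < R)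
    (hθ : θ ∈ Set.Ioc (-Real.pi) Real.pi) (s : ℝ) :
    ((R : ℂ) * Complex.exp (θ * Complex.I)) ^ (s : ℂ)
      = ((R ^ s : ℝ) : ℂ) * Complex.exp ((θ * s : ℝ) * Complex.I) := by
  have hexp := Complex.exp_ne_zero (θ * Complex.I)
  rw [Complex.cpow_def_of_ne_zero (mul_ne_zero (by exact_mod_cast hR.ne') hexp),
    Complex.log_ofReal_mul hR hexp,
    Complex.log_exp (by simpa using hθ.1) (by simpa using hθ.2),
    Real.rpow_def_of_pos hR, Complex.ofReal_exp, ← Complex.exp_add]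
  congr 1
  push_cast
  ring

/-- For `Q⁺(μ) = (2/3) e^{iπ/4} (a⁺ − μ)^{3/2}` (principal branch),
`r_k = ((3π/2)(k − 1/4))^{2/3}` and `μ_k = a⁺ − e^{iπ/6} (mε)^{1/3} r_k`, one has for
every positive integer `k`: `Im μ_k < 0`, `|μ_k − a⁺| = (mε)^{1/3} r_k`,
`Re Q⁺(μ_k) = 0` and `Im Q⁺(μ_k) = (mε)^{1/2}(kπ − π/4)`. -/
theorem eigenvalue_scaling_linear_branch
    (ap : ℝ) (m : ℕ) (hm : 0 < m) (ε : ℝ) (hε : 0 < ε)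
    (Q : ℂ → ℂ)
    (hQ : ∀ μ : ℂ, Q μ = (2/3) * Complex.exp (Complex.I * Real.pi / 4)
        * (((ap : ℂ) - μ) ^ ((3:ℂ)/2)))
    (rk : ℕ → ℝ)
    (hrk : ∀ k : ℕ, rk k = ((3 * Real.pi / 2) * ((k : ℝ) - 1/4)) ^ ((2:ℝ)/3))
    (μk : ℕ → ℂ)
    (hμk : ∀ k : ℕ, μk k = (ap : ℂ) - Complex.exp (Complex.I * Real.pi / 6)
        * ((((m : ℝ) * ε) ^ ((1:ℝ)/3) : ℝ) : ℂ) * ((rk k : ℝ) : ℂ)) :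
    ∀ k : ℕ, 0 < k →
      (μk k).im < 0 ∧
      ‖μk k - (ap : ℂ)‖ = ((m : ℝ) * ε) ^ ((1:ℝ)/3) * rk k ∧
      (Q (μk k)).re = 0 ∧
      (Q (μk k)).im = ((m : ℝ) * ε) ^ ((1:ℝ)/2) * ((k : ℝ) * Real.pi - Real.pi / 4) := by
  intro k hk
  have hk1 : (1 : ℝ) ≤ k := by exact_mod_cast hk
  have hmε : 0 < (m : ℝ) * ε := by positivity
  have hx : 0 < (3 * Real.pi / 2) * ((k : ℝ) - 1/4) :=
    mul_pos (by positivity) (by linarith)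
  have hr : 0 < rk k := by rw [hrk]; positivity
  set R : ℝ := ((m : ℝ) * ε) ^ ((1:ℝ)/3) * rk k with hRdef
  have hR : 0 < R := by positivity
  have hdiff : (ap : ℂ) - μk k
      = (R : ℂ) * Complex.exp ((Real.pi / 6 : ℝ) * Complex.I) := by
    rw [hμk, hRdef]
    push_cast
    rw [show Complex.I * (Real.pi : ℂ) / 6 = Real.pi / 6 * Complex.I by ring]
    ring
  have hpow : R ^ ((3:ℝ)/2)
      = ((m : ℝ) * ε) ^ ((1:ℝ)/2) * ((3 * Real.pi / 2) * ((k : ℝ) - 1/4)) := by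
    rw [hRdef, hrk, Real.mul_rpow (by positivity) (by positivity),
      ← Real.rpow_mul hmε.le, ← Real.rpow_mul hx.le]
    norm_num
  have hQk : Q (μk k)
      = ((((m : ℝ) * ε) ^ ((1:ℝ)/2) * ((k : ℝ) * Real.pi - Real.pi / 4) : ℝ) : ℂ)
        * Complex.I := by
    have hexp : Complex.exp (Complex.I * Real.pi / 4)
        * Complex.exp ((Real.pi / 6 * (3 / 2) : ℝ) * Complex.I) = Complex.I := by
      rw [← Complex.exp_add]
      refine Eq.trans (congrArg Complex.exp ?_) Complex.exp_pi_div_two_mul_I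
      push_cast
      ring
    have hcpow := Complex.ofReal_mul_exp_mul_I_cpow (θ := Real.pi / 6) hR
      ⟨by linarith [Real.pi_pos], by linarith [Real.pi_pos]⟩ (3 / 2)
    rw [hpow, ← hdiff, show ((3 / 2 : ℝ) : ℂ) = 3 / 2 by norm_num] at hcpow
    rw [hQ, hcpow]
    conv_rhs => rw [← hexp]
    push_cast
    ring
  refine ⟨?_, ?_, ?_, ?_⟩
  · have him := congrArg Complex.im hdiff
    rw [Complex.im_ofReal_mul, Complex.exp_ofReal_mul_I_im, Real.sin_pi_div_six,
      Complex.sub_im, Complex.ofReal_im] at him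
    linarith
  · rw [norm_sub_rev, hdiff, norm_mul, Complex.norm_exp_ofReal_mul_I, mul_one,
      Complex.norm_of_nonneg hR.le]
  · rw [hQk, Complex.re_ofReal_mul, Complex.I_re, mul_zero]
  · rw [hQk, Complex.im_ofReal_mul, Complex.I_im, mul_one]
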